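/- arXiv:2212.09296 — 2 statements merged into one kernel-verified Lean document; each statement's English description precedes it below -/
import Mathlib

section
/- Let X be a realcompact space. For every compactly supported Radon measure μ on X and every u ∈ C(X), u is |μ|-integrable; define φ_μ(u) := ∫_X u dμ. Then the map μ ↦ φ_μ is a linear bijection from M_c(X) onto the order dual C(X)~ (the space of order bounded linear functionals on C(X)), and both this map and its inverse are positive; in other words, it is a lattice isomorphism between M_c(X) and C(X)~. -/
open MeasureTheory Function Topology
open scoped ENNReal

/-- A topological space is *realcompact* if it is homeomorphic to a closed subspace of a
product of copies of `ℝ`. -/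
def Realcompact (Y : Type u) [TopologicalSpace Y] : Prop :=
  ∃ (ι : Type u) (s : Set (ι → ℝ)), IsClosed s ∧ Nonempty (Y ≃ₜ s)

/-- A signed Borel measure `μ` is a *Radon measure* if `|μ|(B)` is the supremum of
`|μ|(C)` over compact subsets `C ⊆ B`, for every Borel set `B`. -/
def IsRadon {X : Type u} [TopologicalSpace X] [MeasurableSpace X]
    (μ : SignedMeasure X) : Prop :=
  ∀ B : Set X, MeasurableSet B →
    μ.totalVariation B = ⨆ (C : Set X) (_ : C ⊆ B) (_ : IsCompact C), μ.totalVariation C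

/-- The support of a signed Borel measure. -/
def msupport {X : Type u} [TopologicalSpace X] [MeasurableSpace X]
    (μ : SignedMeasure X) : Set X :=
  {x | ∀ U : Set X, IsOpen U → x ∈ U → 0 < μ.totalVariation U}

/-- Membership in `M_c(X)`: a compactly supported Radon measure. -/
def McMem {X : Type u} [TopologicalSpace X] [MeasurableSpace X]
    (μ : SignedMeasure X) : Prop :=
  IsRadon μ ∧ IsCompact (msupport μ)

/-- The functional `φ_μ : u ↦ ∫_X u dμ`, the integral being taken with respect to the
Jordan decomposition `μ = μ⁺ − μ⁻`. -/
noncomputable def phiFun {X : Type u} [TopologicalSpace X] [MeasurableSpace X]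
    (μ : SignedMeasure X) : C(X, ℝ) → ℝ := fun u =>
  (∫ x, u x ∂μ.toJordanDecomposition.posPart) - ∫ x, u x ∂μ.toJordanDecomposition.negPart

/-- A linear functional on a preordered real vector space is *order bounded* if it maps
every order interval to a bounded set of reals. -/
def IsOrderBdd (E : Type v) [AddCommGroup E] [Module ℝ E] [Preorder E]
    (φ : E →ₗ[ℝ] ℝ) : Prop :=
  ∀ u v : E, ∃ M : ℝ, ∀ w : E, u ≤ w → w ≤ v → |φ w| ≤ M

/-!
By the Riesz–Kantorovich formula an order bounded functional on `C(X)` is a difference of two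
positive ones. A positive functional `ψ` is nonzero on only finitely many members of a locally
finite family of nonnegative functions: otherwise, rescaled to have value `1`, these would have a
continuous sum on which `ψ` is infinite. Applied to the functions `(f - n)⁺`, this shows that every
`f ∈ C(X)` is bounded, up to a `ψ`-null function, along the sets that carry `ψ`. In a realcompact
space an ultrafilter along which every continuous function is bounded converges, so these sets
shrink to a compact one, and `ψ` factors through restriction to it. There the Riesz–Markov–Kakutani
theorem applies. Conversely, Urysohn functions separating a compact set from the complement of an
open one show that the integrals determine the order between compactly supported Radon measures,
hence also the measures.
-/

open Set Filter

section OrderBounded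

variable {E : Type*} [AddCommGroup E] [Module ℝ E]

theorem isOrderBdd_positiveLinearMap [PartialOrder E] (ψ : E →ₚ[ℝ] ℝ) :
    IsOrderBdd E ψ.toLinearMap := fun u v =>
  ⟨max |ψ u| |ψ v|, fun _ huw hwv =>
    abs_le_max_abs_abs (OrderHomClass.mono ψ huw) (OrderHomClass.mono ψ hwv)⟩

variable [Preorder E] {φ ψ : E →ₗ[ℝ] ℝ}

theorem IsOrderBdd.sub (hφ : IsOrderBdd E φ) (hψ : IsOrderBdd E ψ) : IsOrderBdd E (φ - ψ) := by
  intro u v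
  obtain ⟨M, hM⟩ := hφ u v
  obtain ⟨N, hN⟩ := hψ u v
  exact ⟨M + N, fun w huw hwv =>
    (abs_sub (φ w) (ψ w)).trans (add_le_add (hM w huw hwv) (hN w huw hwv))⟩

theorem IsOrderBdd.bddAbove_image_Icc (hφ : IsOrderBdd E φ) (u v : E) :
    BddAbove (φ '' Icc u v) := by
  obtain ⟨M, hM⟩ := hφ u v
  exact ⟨M, forall_mem_image.2 fun w hw => le_of_abs_le (hM w hw.1 hw.2)⟩

/-- The Riesz–Kantorovich formula `sup {φ w | 0 ≤ w ≤ u}` for the value at `u ≥ 0` of the positive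
part of the order bounded functional `φ`. -/
noncomputable def rieszKantorovich (φ : E →ₗ[ℝ] ℝ) (u : E) : ℝ := sSup (φ '' Icc 0 u)

theorem le_rieszKantorovich (hφ : IsOrderBdd E φ) {u w : E} (hw : 0 ≤ w) (hwu : w ≤ u) :
    φ w ≤ rieszKantorovich φ u :=
  le_csSup (hφ.bddAbove_image_Icc 0 u) (mem_image_of_mem φ ⟨hw, hwu⟩)

end OrderBounded

open scoped Pointwise in
theorem rieszKantorovich_smul {E : Type*} [AddCommGroup E] [PartialOrder E] [Module ℝ E]
    [PosSMulMono ℝ E] (φ : E →ₗ[ℝ] ℝ) {c : ℝ} (hc : 0 < c) (u : E) :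
    rieszKantorovich φ (c • u) = c * rieszKantorovich φ u := by
  have hIcc : Icc 0 (c • u) = c • Icc 0 u := by
    simpa using ((OrderIso.smulRight (β := E) hc).image_Icc 0 u).symm
  rw [rieszKantorovich, hIcc, image_smul_set, Real.sSup_smul_of_nonneg hc.le, smul_eq_mul,
    rieszKantorovich]

section VectorLattice

open scoped Pointwise

variable {E : Type*} [AddCommGroup E] [Lattice E] [IsOrderedAddMonoid E]

theorem Icc_zero_add_Icc_zero {u v : E} (hu : 0 ≤ u) (hv : 0 ≤ v) :
    Icc 0 u + Icc 0 v = Icc 0 (u + v) := by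
  refine Subset.antisymm (by simpa using Icc_add_Icc_subset 0 u 0 v) fun w hw => ?_
  refine mem_add.2 ⟨w ⊓ u, ⟨le_inf hw.1 hu, inf_le_right⟩, (w - u)⁺, ⟨posPart_nonneg _, ?_⟩, ?_⟩
  · exact sup_le (sub_le_iff_le_add'.2 hw.2) hv
  · rw [inf_eq_sub_posPart_sub, sub_add_cancel]

theorem apply_posPart_sub_apply_negPart {G : Type*} [AddCommGroup G] {p : E → G}
    (hadd : ∀ u v, 0 ≤ u → 0 ≤ v → p (u + v) = p u + p v) {u v w : E} (hu : 0 ≤ u) (hv : 0 ≤ v)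
    (hw : w = u - v) : p w⁺ - p w⁻ = p u - p v := by
  have hcross : w⁺ + v = u + w⁻ := by rw [← sub_eq_sub_iff_add_eq_add, posPart_sub_negPart, hw]
  rw [sub_eq_sub_iff_add_eq_add, ← hadd _ _ (posPart_nonneg w) hv, hcross,
    hadd _ _ hu (negPart_nonneg w)]

variable [Module ℝ E]

theorem exists_linearMap_eqOn_Ici_zero [PosSMulMono ℝ E] {p : E → ℝ}
    (hadd : ∀ u v, 0 ≤ u → 0 ≤ v → p (u + v) = p u + p v)
    (hsmul : ∀ (c : ℝ) u, 0 < c → 0 ≤ u → p (c • u) = c * p u) :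
    ∃ ψ : E →ₗ[ℝ] ℝ, EqOn ψ p (Ici 0) := by
  let ψ : E →+ ℝ := AddMonoidHom.mk' (fun u => p u⁺ - p u⁻) fun u v => by
    rw [apply_posPart_sub_apply_negPart hadd (add_nonneg (posPart_nonneg u) (posPart_nonneg v))
      (add_nonneg (negPart_nonneg u) (negPart_nonneg v)), hadd _ _ (posPart_nonneg u)
      (posPart_nonneg v), hadd _ _ (negPart_nonneg u) (negPart_nonneg v), add_sub_add_comm]
    rw [add_sub_add_comm, posPart_sub_negPart, posPart_sub_negPart]
  have hψ_smul : ∀ (c : ℝ) (u : E), 0 < c → ψ (c • u) = c * ψ u := by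
    intro c u hc
    change p (c • u)⁺ - p (c • u)⁻ = c * (p u⁺ - p u⁻)
    rw [apply_posPart_sub_apply_negPart hadd (smul_nonneg hc.le (posPart_nonneg u))
      (smul_nonneg hc.le (negPart_nonneg u)), hsmul c _ hc (posPart_nonneg u),
      hsmul c _ hc (negPart_nonneg u), mul_sub]
    rw [← smul_sub, posPart_sub_negPart]
  refine ⟨{ ψ with map_smul' := fun c u => ?_ }, fun u hu => ?_⟩
  · rcases lt_trichotomy c 0 with hc | rfl | hc
    · simpa [neg_smul, map_neg] using hψ_smul (-c) u (neg_pos.2 hc)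
    · simp
    · exact hψ_smul c u hc
  · have hp_zero : p 0 = 0 := by simpa using hadd 0 0 le_rfl le_rfl
    have := apply_posPart_sub_apply_negPart hadd hu le_rfl (sub_zero u).symm
    rwa [hp_zero, sub_zero] at this

variable {φ : E →ₗ[ℝ] ℝ}

theorem rieszKantorovich_add (hφ : IsOrderBdd E φ) {u v : E} (hu : 0 ≤ u) (hv : 0 ≤ v) :
    rieszKantorovich φ (u + v) = rieszKantorovich φ u + rieszKantorovich φ v := by
  simp only [rieszKantorovich]
  rw [← Icc_zero_add_Icc_zero hu hv, image_add]
  exact csSup_add ((nonempty_Icc.2 hu).image φ) (hφ.bddAbove_image_Icc 0 u)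
    ((nonempty_Icc.2 hv).image φ) (hφ.bddAbove_image_Icc 0 v)

theorem IsOrderBdd.exists_eq_sub_positiveLinearMap [PosSMulMono ℝ E] (hφ : IsOrderBdd E φ) :
    ∃ ψ₁ ψ₂ : E →ₚ[ℝ] ℝ, φ = ψ₁.toLinearMap - ψ₂.toLinearMap := by
  obtain ⟨ψ, hψ⟩ := exists_linearMap_eqOn_Ici_zero (fun u v => rieszKantorovich_add hφ)
    fun c u hc _ => rieszKantorovich_smul φ hc u
  have hψ_nonneg : ∀ u, 0 ≤ u → 0 ≤ ψ u := fun u hu => by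
    simpa [hψ hu] using le_rieszKantorovich hφ le_rfl hu
  have hφ_le : ∀ u, 0 ≤ u → 0 ≤ (ψ - φ) u := fun u hu => by
    simpa [hψ hu] using le_rieszKantorovich hφ hu le_rfl
  exact ⟨.mk₀ ψ hψ_nonneg, .mk₀ (ψ - φ) hφ_le, (sub_sub_cancel ψ φ).symm⟩

end VectorLattice

section PositiveFunctional

variable {X : Type*} [TopologicalSpace X]

theorem sum_le_finsum_of_nonneg {ι : Type*} {a : ι → ℝ} (ha : ∀ i, 0 ≤ a i)
    (hfin : (support a).Finite) (s : Finset ι) : ∑ i ∈ s, a i ≤ ∑ᶠ i, a i := by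
  classical
  rw [finsum_eq_sum_of_support_subset (s := hfin.toFinset ∪ s) a (by simp)]
  exact Finset.sum_le_sum_of_subset_of_nonneg Finset.subset_union_right fun i _ _ => ha i

theorem finite_apply_ne_zero_of_locallyFinite (ψ : C(X, ℝ) →ₚ[ℝ] ℝ) {ι : Type*}
    {w : ι → C(X, ℝ)} (hw : ∀ i, 0 ≤ w i) (hf : LocallyFinite fun i => support (w i)) :
    {i | ψ (w i) ≠ 0}.Finite := by
  have hψw : ∀ i, 0 ≤ ψ (w i) := fun i => ψ.map_nonneg (hw i)
  let v : ι → C(X, ℝ) := fun i => (ψ (w i))⁻¹ • w i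
  have hv : ∀ i x, 0 ≤ v i x := fun i x => mul_nonneg (inv_nonneg.2 (hψw i)) (hw i x)
  have hvf : LocallyFinite fun i => support (v i) :=
    hf.subset fun i => support_const_smul_subset (ψ (w i))⁻¹ (w i)
  let F : C(X, ℝ) := ⟨fun x => ∑ᶠ i, v i x, continuous_finsum (fun i => (v i).continuous) hvf⟩
  by_contra hinf
  obtain ⟨n, hn⟩ := exists_nat_gt (ψ F)
  obtain ⟨s, hs, hcard⟩ := Set.Infinite.exists_subset_card_eq hinf n
  have hψv : ∀ i ∈ s, ψ (v i) = 1 := fun i hi => by simpa [v] using inv_mul_cancel₀ (hs hi)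
  refine hn.not_ge ?_
  calc (n : ℝ) = ∑ i ∈ s, ψ (v i) := by simp [Finset.sum_congr rfl hψv, hcard]
    _ = ψ (∑ i ∈ s, v i) := (map_sum ψ v s).symm
    _ ≤ ψ F := OrderHomClass.mono ψ fun x => by
        change (∑ i ∈ s, v i) x ≤ ∑ᶠ i, v i x
        rw [ContinuousMap.sum_apply]
        exact sum_le_finsum_of_nonneg (fun i => hv i x) (hvf.point_finite x) s

theorem locallyFinite_support_posPart_sub_natCast (f : C(X, ℝ)) :
    LocallyFinite fun n : ℕ => support ((f - (n : C(X, ℝ)))⁺ : C(X, ℝ)) := by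
  intro x
  refine ⟨{y | f y < f x + 1}, (isOpen_lt f.continuous continuous_const).mem_nhds (by simp), ?_⟩
  refine (finite_le_nat ⌈f x + 1⌉₊).subset ?_
  rintro n ⟨y, hny, hy⟩
  have hn_lt : (n : ℝ) < f y := by
    by_contra! hle
    exact hny (sup_eq_right.2 (by simpa using hle))
  exact_mod_cast (hn_lt.trans hy).le.trans (Nat.le_ceil (f x + 1))

theorem exists_nat_apply_posPart_sub_eq_zero (ψ : C(X, ℝ) →ₚ[ℝ] ℝ) (f : C(X, ℝ)) :
    ∃ n : ℕ, ψ (f - (n : C(X, ℝ)))⁺ = 0 := by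
  obtain ⟨n, hn⟩ := (finite_apply_ne_zero_of_locallyFinite ψ (fun _ => posPart_nonneg _)
    (locallyFinite_support_posPart_sub_natCast f)).exists_notMem
  exact ⟨n, not_not.1 hn⟩

/-- The cone of nonnegative functions on which the positive functional `ψ` vanishes. -/
def nullCone (ψ : C(X, ℝ) →ₚ[ℝ] ℝ) : AddSubmonoid C(X, ℝ) where
  carrier := {w | 0 ≤ w ∧ ψ w = 0}
  zero_mem' := ⟨le_rfl, map_zero ψ⟩
  add_mem' := fun hv hw => ⟨add_nonneg hv.1 hw.1, by rw [map_add, hv.2, hw.2, add_zero]⟩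

/-- The support of the positive functional `ψ`, encoded as the set of common zeros of its null
cone. For `ψ u = ∫ u dμ` with `μ` a compactly supported Radon measure it is the support of `μ`. -/
def functionalSupport (ψ : C(X, ℝ) →ₚ[ℝ] ℝ) : Set X := {x | ∀ w ∈ nullCone ψ, w x = 0}

theorem exists_natCast_posPart_abs_sub_mem_nullCone (ψ : C(X, ℝ) →ₚ[ℝ] ℝ) (f : C(X, ℝ)) :
    ∃ n : ℕ, (|f| - (n : C(X, ℝ)))⁺ ∈ nullCone ψ :=
  (exists_nat_apply_posPart_sub_eq_zero ψ |f|).imp fun _ hn => ⟨posPart_nonneg _, hn⟩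

theorem abs_apply_lt_of_posPart_abs_sub_natCast_lt {f : C(X, ℝ)} {n : ℕ} {c : ℝ} {x : X}
    (h : (|f| - (n : C(X, ℝ)))⁺ x < c) : |f x| < n + c :=
  sub_lt_iff_lt_add'.1 ((le_sup_left (a := |f x| - n) (b := 0)).trans_lt h)

end PositiveFunctional

section Realcompact

theorem Realcompact.t35Space {X : Type u} [TopologicalSpace X] (hX : Realcompact X) :
    T35Space X := by
  obtain ⟨ι, s, -, ⟨e⟩⟩ := hX
  exact (IsEmbedding.subtypeVal.comp e.isEmbedding).t35Space

variable {X : Type u} [TopologicalSpace X]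

theorem Realcompact.exists_ultrafilter_le_nhds (hX : Realcompact X) (U : Ultrafilter X)
    (hU : ∀ f : C(X, ℝ), ∃ M : ℝ, ∀ᶠ x in (U : Filter X), |f x| ≤ M) :
    ∃ x, (U : Filter X) ≤ 𝓝 x := by
  obtain ⟨ι, s, hs, ⟨e⟩⟩ := hX
  have hcoord : ∀ i, ∃ l, Tendsto (fun x => (e x).1 i) U (𝓝 l) := fun i => by
    obtain ⟨M, hM⟩ := hU ⟨fun x => (e x).1 i,
      (continuous_apply i).comp (continuous_subtype_val.comp e.continuous)⟩
    obtain ⟨l, -, hl⟩ := (isCompact_Icc (a := -M) (b := M)).ultrafilter_le_nhds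
      (U.map fun x => (e x).1 i) (le_principal_iff.2 (hM.mono fun x hx => abs_le.1 hx))
    exact ⟨l, hl⟩
  choose l hl using hcoord
  have hlim : Tendsto (fun x => (e x).1) U (𝓝 l) := tendsto_pi_nhds.2 hl
  have hls : l ∈ s := hs.mem_of_tendsto hlim (Eventually.of_forall fun x => (e x).2)
  refine ⟨e.symm ⟨l, hls⟩, ?_⟩
  have he : Tendsto e U (𝓝 ⟨l, hls⟩) := tendsto_subtype_rng.2 hlim
  simpa [Function.comp_def, Tendsto] using (e.symm.continuous.tendsto ⟨l, hls⟩).comp he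

variable (hX : Realcompact X) (ψ : C(X, ℝ) →ₚ[ℝ] ℝ)

include hX

theorem Realcompact.exists_le_nhds_of_eventually_lt_one (U : Ultrafilter X)
    (hU : ∀ w ∈ nullCone ψ, ∀ᶠ x in (U : Filter X), w x < 1) :
    ∃ x ∈ functionalSupport ψ, (U : Filter X) ≤ 𝓝 x := by
  obtain ⟨x, hx⟩ := hX.exists_ultrafilter_le_nhds U fun f => by
    obtain ⟨n, hn⟩ := exists_natCast_posPart_abs_sub_mem_nullCone ψ f
    exact ⟨n + 1, (hU _ hn).mono fun x hx => (abs_apply_lt_of_posPart_abs_sub_natCast_lt hx).le⟩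
  refine ⟨x, fun w hw => le_antisymm ?_ (hw.1 x), hx⟩
  by_contra! hpos
  obtain ⟨k, hk⟩ := exists_nat_gt (w x)⁻¹
  have hle : (k • w) x ≤ 1 := le_of_tendsto (((k • w).continuous.tendsto x).mono_left hx)
    ((hU _ ((nullCone ψ).nsmul_mem hw k)).mono fun y hy => hy.le)
  rw [inv_lt_iff_one_lt_mul₀ hpos] at hk
  refine hle.not_gt ?_
  simpa [mul_comm] using hk

theorem Realcompact.isCompact_functionalSupport : IsCompact (functionalSupport ψ) := by
  refine isCompact_iff_ultrafilter_le_nhds.2 fun U hU => ?_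
  obtain ⟨x, hx⟩ := hX.exists_le_nhds_of_eventually_lt_one ψ U fun w hw =>
    mem_of_superset (le_principal_iff.1 hU) fun x hx => by simp [hx w hw]
  exact ⟨x, hx⟩

theorem Realcompact.exists_mem_nullCone_one_le {F : Set X} (hF : IsClosed F)
    (hdisj : Disjoint F (functionalSupport ψ)) : ∃ w ∈ nullCone ψ, ∀ x ∈ F, 1 ≤ w x := by
  by_contra! hcon
  let l : Filter X := ⨅ w : nullCone ψ, 𝓟 (F ∩ {x | w.1 x < 1})
  have hdir : Directed (· ≥ ·) fun w : nullCone ψ => 𝓟 (F ∩ {x | w.1 x < 1}) := fun v w =>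
    ⟨v + w, principal_mono.2 fun x hx => ⟨hx.1, (le_add_of_nonneg_right (w.2.1 x)).trans_lt hx.2⟩,
      principal_mono.2 fun x hx => ⟨hx.1, (le_add_of_nonneg_left (v.2.1 x)).trans_lt hx.2⟩⟩
  have hne : l.NeBot := iInf_neBot_of_directed' hdir fun w => principal_neBot_iff.2 (hcon w.1 w.2)
  have hmem : ∀ w ∈ nullCone ψ, F ∩ {x | w x < 1} ∈ Ultrafilter.of l := fun w hw =>
    Ultrafilter.of_le l (mem_iInf_of_mem ⟨w, hw⟩ (mem_principal_self _))
  obtain ⟨x, hxψ, hx⟩ := hX.exists_le_nhds_of_eventually_lt_one ψ (.of l) fun w hw =>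
    mem_of_superset (hmem w hw) inter_subset_right
  have hxF : x ∈ F := isClosed_iff_ultrafilter.1 hF x (.of l) hx
    (mem_of_superset (hmem 0 (zero_mem _)) inter_subset_left)
  exact hdisj.ne_of_mem hxF hxψ rfl

theorem Realcompact.apply_nonpos_of_eqOn_zero {v : C(X, ℝ)} (hv : EqOn v 0 (functionalSupport ψ)) :
    ψ v ≤ 0 := by
  have hle : ∀ ε > 0, ψ v ≤ ψ 1 * ε := fun ε hε => by
    obtain ⟨w, hw, hwF⟩ := hX.exists_mem_nullCone_one_le ψ
      (isClosed_le continuous_const v.continuous : IsClosed {x | ε ≤ v x})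
      (disjoint_left.2 fun x hx hxψ => hε.not_ge (hx.trans_eq (hv hxψ)))
    obtain ⟨n, hn⟩ := exists_nat_apply_posPart_sub_eq_zero ψ v
    have hv_le : v ≤ ε • 1 + (n : ℝ) • w + (v - (n : C(X, ℝ)))⁺ := fun x => by
      change v x ≤ (ε • 1 + (n : ℝ) • w) x + (v x - n)⁺
      have hnw : 0 ≤ n * w x := mul_nonneg n.cast_nonneg (hw.1 x)
      simp only [ContinuousMap.add_apply, ContinuousMap.smul_apply, ContinuousMap.one_apply,
        smul_eq_mul, mul_one]
      rcases le_or_gt ε (v x) with hxF | hxF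
      · have hnw' : (n : ℝ) ≤ n * w x := le_mul_of_one_le_right n.cast_nonneg (hwF x hxF)
        linarith [le_posPart (v x - n)]
      · linarith [posPart_nonneg (v x - n)]
    simpa [hw.2, hn, mul_comm] using OrderHomClass.mono ψ hv_le
  by_contra! hpos
  obtain ⟨ε, hε, hlt⟩ := exists_pos_mul_lt hpos (ψ 1)
  exact (hle ε hε).not_gt hlt

theorem Realcompact.apply_eq_zero_of_eqOn_zero {u : C(X, ℝ)}
    (hu : EqOn u 0 (functionalSupport ψ)) : ψ u = 0 :=
  le_antisymm (hX.apply_nonpos_of_eqOn_zero ψ hu) <| by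
    simpa using hX.apply_nonpos_of_eqOn_zero ψ (v := -u) fun x hx => by simp [hu hx]

end Realcompact

section CompactCarrier

variable {X : Type*} [TopologicalSpace X]

theorem exists_restrict_eq_of_isCompact [T35Space X] {K : Set X} (hK : IsCompact K) (g : C(K, ℝ)) :
    ∃ u : C(X, ℝ), u.restrict K = g := by
  have := isCompact_iff_compactSpace.1 hK
  have hemb : IsClosedEmbedding fun x : K => stoneCechUnit (x : X) :=
    (continuous_stoneCechUnit.comp continuous_subtype_val).isClosedEmbedding
      (injective_stoneCechUnit_of_t35Space.comp Subtype.val_injective)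
  obtain ⟨f, hf⟩ := ContinuousMap.exists_extension hemb g
  exact ⟨f.comp ⟨stoneCechUnit, continuous_stoneCechUnit⟩, hf⟩

theorem exists_positiveLinearMap_restrict [T35Space X] {K : Set X} (hK : IsCompact K)
    (ψ : C(X, ℝ) →ₚ[ℝ] ℝ) (hψ : ∀ u : C(X, ℝ), EqOn u 0 K → ψ u = 0) :
    ∃ Λ : C(K, ℝ) →ₚ[ℝ] ℝ, ∀ u, Λ (u.restrict K) = ψ u := by
  let R : C(X, ℝ) →ₗ[ℝ] C(K, ℝ) :=
    (ContinuousMap.compRightAlgHom ℝ ℝ ⟨Subtype.val, continuous_subtype_val⟩).toLinearMap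
  have hψR : ∀ u v : C(X, ℝ), R u = R v → ψ u = ψ v := fun u v huv =>
    sub_eq_zero.1 <| (map_sub ψ u v).symm.trans <| hψ (u - v) fun x hx =>
      sub_eq_zero.2 (DFunLike.congr_fun huv ⟨x, hx⟩)
  obtain ⟨S, hS⟩ := R.exists_rightInverse_of_surjective
    (LinearMap.range_eq_top.2 (exists_restrict_eq_of_isCompact hK))
  have hRS : ∀ g, R (S g) = g := LinearMap.congr_fun hS
  refine ⟨.mk₀ (ψ.toLinearMap ∘ₗ S) fun g hg => ?_, fun u => hψR _ _ (hRS (R u))⟩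
  have habs : R |S g| = R (S g) := by
    ext x
    have hx : (S g) x = g x := DFunLike.congr_fun (hRS g) x
    exact abs_of_nonneg ((hg x).trans_eq hx.symm)
  exact (ψ.map_nonneg (abs_nonneg (S g))).trans_eq (hψR _ _ habs)

open scoped CompactlySupported in
theorem exists_regular_forall_apply_eq_integral {K : Type*} [TopologicalSpace K] [CompactSpace K]
    [T2Space K] [MeasurableSpace K] [BorelSpace K] (Λ : C(K, ℝ) →ₚ[ℝ] ℝ) :
    ∃ m : Measure K, IsFiniteMeasure m ∧ m.Regular ∧ ∀ g : C(K, ℝ), Λ g = ∫ x, g x ∂m := by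
  let T : C_c(K, ℝ) →ₚ[ℝ] ℝ := .mk₀
    { toFun := fun g => Λ g.toContinuousMap
      map_add' := fun f g => map_add Λ f.toContinuousMap g.toContinuousMap
      map_smul' := fun c g => map_smul Λ c g.toContinuousMap }
    fun g hg => Λ.map_nonneg hg
  exact ⟨RealRMK.rieszMeasure T, inferInstance, inferInstance, fun g =>
    (RealRMK.integral_rieszMeasure T ⟨g, .of_compactSpace _⟩).symm⟩

theorem exists_innerRegular_forall_apply_eq_integral [T35Space X] [MeasurableSpace X]
    [BorelSpace X] {K : Set X} (hK : IsCompact K) (ψ : C(X, ℝ) →ₚ[ℝ] ℝ)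
    (hψ : ∀ u : C(X, ℝ), EqOn u 0 K → ψ u = 0) :
    ∃ m : Measure X, IsFiniteMeasure m ∧ m.InnerRegular ∧ m Kᶜ = 0 ∧
      ∀ u : C(X, ℝ), ψ u = ∫ x, u x ∂m := by
  have := isCompact_iff_compactSpace.1 hK
  obtain ⟨Λ, hΛ⟩ := exists_positiveLinearMap_restrict hK ψ hψ
  obtain ⟨m, hm_fin, hm_reg, hm⟩ := exists_regular_forall_apply_eq_integral Λ
  refine ⟨m.map Subtype.val, inferInstance, .map_of_continuous continuous_subtype_val, ?_,
    fun u => ?_⟩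
  · rw [Measure.map_apply measurable_subtype_coe hK.measurableSet.compl]
    simp
  · rw [← hΛ, hm, integral_map measurable_subtype_coe.aemeasurable
      u.continuous.aestronglyMeasurable]
    rfl

end CompactCarrier

theorem Realcompact.exists_isCompact_innerRegular {X : Type u} [TopologicalSpace X]
    [MeasurableSpace X] [BorelSpace X] (hX : Realcompact X) (ψ : C(X, ℝ) →ₚ[ℝ] ℝ) :
    ∃ (m : Measure X) (K : Set X), IsFiniteMeasure m ∧ m.InnerRegular ∧ IsCompact K ∧ m Kᶜ = 0 ∧
      ∀ u : C(X, ℝ), ψ u = ∫ x, u x ∂m := by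
  have := hX.t35Space
  have hK := hX.isCompact_functionalSupport ψ
  obtain ⟨m, hm_fin, hm_reg, hmK, hm⟩ := exists_innerRegular_forall_apply_eq_integral hK ψ
    fun u => hX.apply_eq_zero_of_eqOn_zero ψ
  exact ⟨m, functionalSupport ψ, hm_fin, hm_reg, hK, hmK, hm⟩

section SignedMeasure

variable {X : Type*} [MeasurableSpace X]

theorem totalVariation_toSignedMeasure_sub_le (a b : Measure X) [IsFiniteMeasure a]
    [IsFiniteMeasure b] : (a.toSignedMeasure - b.toSignedMeasure).totalVariation ≤ a + b := by
  simpa only [SignedMeasure.totalVariation_eq_variation, Measure.variation_toSignedMeasure] using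
    VectorMeasure.variation_sub_le (μ := a.toSignedMeasure) (ν := b.toSignedMeasure)

theorem le_iff_posPart_add_negPart_le (μ ν : SignedMeasure X) :
    μ ≤ ν ↔ μ.toJordanDecomposition.posPart + ν.toJordanDecomposition.negPart ≤
      ν.toJordanDecomposition.posPart + μ.toJordanDecomposition.negPart := by
  conv_lhs => rw [← μ.toSignedMeasure_toJordanDecomposition,
    ← ν.toSignedMeasure_toJordanDecomposition]
  rw [← Measure.toSignedMeasure_le_toSignedMeasure_iff, Measure.toSignedMeasure_add,
    Measure.toSignedMeasure_add]
  exact sub_le_sub_iff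

theorem integral_toSignedMeasure_sub {a b : Measure X} [IsFiniteMeasure a] [IsFiniteMeasure b]
    {f : X → ℝ} (ha : Integrable f a) (hb : Integrable f b) :
    ∫ᵛ x, f x ∂<•(a.toSignedMeasure - b.toSignedMeasure) = ∫ x, f x ∂a - ∫ x, f x ∂b := by
  rw [VectorMeasure.integral_sub_vectorMeasure, VectorMeasure.integral_toSignedMeasure,
    VectorMeasure.integral_toSignedMeasure]
  all_goals rwa [VectorMeasure.Integrable, Measure.variation_toSignedMeasure]

variable [TopologicalSpace X] {μ ν : SignedMeasure X} {u : C(X, ℝ)}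

theorem phiFun_eq_integral_vectorMeasure (hu : Integrable u μ.totalVariation) :
    phiFun μ u = ∫ᵛ x, u x ∂<•μ := by
  conv_rhs => rw [← μ.toSignedMeasure_toJordanDecomposition]
  exact (integral_toSignedMeasure_sub hu.left_of_add_measure hu.right_of_add_measure).symm

theorem phiFun_toSignedMeasure_sub {a b : Measure X} [IsFiniteMeasure a] [IsFiniteMeasure b]
    (ha : Integrable u a) (hb : Integrable u b) :
    phiFun (a.toSignedMeasure - b.toSignedMeasure) u = ∫ x, u x ∂a - ∫ x, u x ∂b := by
  rw [phiFun_eq_integral_vectorMeasure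
    ((ha.add_measure hb).mono_measure (totalVariation_toSignedMeasure_sub_le a b)),
    integral_toSignedMeasure_sub ha hb]

theorem phiFun_add (hμ : Integrable u μ.totalVariation) (hν : Integrable u ν.totalVariation) :
    phiFun (μ + ν) u = phiFun μ u + phiFun ν u := by
  have hμν : Integrable u (μ + ν).totalVariation := by
    rw [SignedMeasure.totalVariation_eq_variation] at hμ hν ⊢
    exact VectorMeasure.Integrable.add_vectorMeasure hμ hν
  rw [phiFun_eq_integral_vectorMeasure hμν, phiFun_eq_integral_vectorMeasure hμ,
    phiFun_eq_integral_vectorMeasure hν]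
  rw [SignedMeasure.totalVariation_eq_variation] at hμ hν
  exact VectorMeasure.integral_add_vectorMeasure hμ hν

theorem phiFun_smul (c : ℝ) (hμ : Integrable u μ.totalVariation) :
    phiFun (c • μ) u = c * phiFun μ u := by
  have hcμ : Integrable u (c • μ).totalVariation := by
    rw [SignedMeasure.totalVariation_eq_variation] at hμ ⊢
    exact VectorMeasure.Integrable.smul_vectorMeasure hμ c
  rw [phiFun_eq_integral_vectorMeasure hcμ, phiFun_eq_integral_vectorMeasure hμ]
  exact VectorMeasure.integral_smul_vectorMeasure u c

/-- The positive functional `u ↦ ∫ u dm` on `C(X)`, for a measure `m` that integrates every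
continuous function. -/
noncomputable def integralPositiveLinearMap (m : Measure X)
    (hm : ∀ u : C(X, ℝ), Integrable u m) : C(X, ℝ) →ₚ[ℝ] ℝ :=
  .mk₀
    { toFun := fun u => ∫ x, u x ∂m
      map_add' := fun u v => integral_add (hm u) (hm v)
      map_smul' := fun c u => integral_const_mul c u }
    fun _ hu => integral_nonneg hu

theorem exists_linearMap_eq_phiFun (h : ∀ u : C(X, ℝ), Integrable u μ.totalVariation) :
    ∃ φ : C(X, ℝ) →ₗ[ℝ] ℝ, ⇑φ = phiFun μ ∧ IsOrderBdd C(X, ℝ) φ :=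
  ⟨(integralPositiveLinearMap _ fun u => (h u).left_of_add_measure).toLinearMap -
      (integralPositiveLinearMap _ fun u => (h u).right_of_add_measure).toLinearMap, rfl,
    (isOrderBdd_positiveLinearMap _).sub (isOrderBdd_positiveLinearMap _)⟩

end SignedMeasure

section RadonMeasure

variable {X : Type*} [TopologicalSpace X] [MeasurableSpace X]

theorem isRadon_iff_innerRegular (μ : SignedMeasure X) :
    IsRadon μ ↔ μ.totalVariation.InnerRegular := by
  refine ⟨fun h => ⟨fun B hB r hr => ?_⟩, fun h B hB => h.innerRegular.measure_eq_iSup hB⟩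
  rw [h B hB] at hr
  simpa only [lt_iSup_iff, exists_prop] using hr

theorem msupport_eq_support (μ : SignedMeasure X) : msupport μ = μ.totalVariation.support := by
  simp only [msupport, Measure.support_eq_forall_isOpen]
  grind

theorem mcMem_zero : McMem (0 : SignedMeasure X) := by
  refine ⟨(isRadon_iff_innerRegular 0).2 ?_, ?_⟩
  · rw [SignedMeasure.totalVariation_zero]
    infer_instance
  · rw [msupport_eq_support, SignedMeasure.totalVariation_zero, Measure.support_zero]
    exact isCompact_empty

variable [BorelSpace X]

theorem innerRegular_of_le [T2Space X] {a c : Measure X} [IsFiniteMeasure c] [c.InnerRegular]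
    (hac : a ≤ c) : a.InnerRegular := by
  refine ⟨fun B hB r hr => ?_⟩
  obtain ⟨K, hKB, hK, hlt⟩ := hB.exists_isCompact_sdiff_lt (μ := c) (measure_ne_top c B)
    (tsub_pos_of_lt hr).ne'
  refine ⟨K, hKB, hK, lt_of_not_ge fun hle => ?_⟩
  have hB_le : a B ≤ a (B \ K) + r :=
    calc a B = a (B \ K ∪ K) := by rw [sdiff_union_of_subset hKB]
      _ ≤ a (B \ K) + a K := measure_union_le _ _
      _ ≤ a (B \ K) + r := by gcongr
  exact ((hac _).trans_lt hlt).not_ge (tsub_le_iff_right.2 hB_le)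

theorem integrable_of_measure_compl_eq_zero {m : Measure X} [IsFiniteMeasure m] {K : Set X}
    (hK : IsCompact K) (hmK : m Kᶜ = 0) (u : C(X, ℝ)) : Integrable u m := by
  obtain ⟨M, hM⟩ := hK.exists_bound_of_continuousOn u.continuous.continuousOn
  have hK_ae : ∀ᵐ x ∂m, x ∈ K := hmK
  exact .of_bound u.continuous.aestronglyMeasurable M (hK_ae.mono hM)

theorem McMem.integrable {μ : SignedMeasure X} (hμ : McMem μ) (u : C(X, ℝ)) :
    Integrable u μ.totalVariation := by
  have := (isRadon_iff_innerRegular μ).1 hμ.1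
  refine integrable_of_measure_compl_eq_zero hμ.2 ?_ u
  rw [msupport_eq_support, Measure.measure_compl_support_of_innerRegular]

theorem McMem.innerRegular_posPart [T2Space X] {μ : SignedMeasure X} (hμ : McMem μ) :
    μ.toJordanDecomposition.posPart.InnerRegular :=
  have := (isRadon_iff_innerRegular μ).1 hμ.1
  innerRegular_of_le (c := μ.totalVariation) (Measure.le_add_right le_rfl)

theorem McMem.innerRegular_negPart [T2Space X] {μ : SignedMeasure X} (hμ : McMem μ) :
    μ.toJordanDecomposition.negPart.InnerRegular :=
  have := (isRadon_iff_innerRegular μ).1 hμ.1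
  innerRegular_of_le (c := μ.totalVariation) (Measure.le_add_left le_rfl)

theorem mcMem_toSignedMeasure_sub [T2Space X] {a b : Measure X} [IsFiniteMeasure a]
    [IsFiniteMeasure b] [a.InnerRegular] [b.InnerRegular] {K L : Set X} (hK : IsCompact K)
    (hL : IsCompact L) (ha : a Kᶜ = 0) (hb : b Lᶜ = 0) :
    McMem (a.toSignedMeasure - b.toSignedMeasure) := by
  have hle := totalVariation_toSignedMeasure_sub_le a b
  refine ⟨(isRadon_iff_innerRegular _).2 (innerRegular_of_le hle),
    (hK.union hL).of_isClosed_subset ?_ ?_⟩ <;> rw [msupport_eq_support]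
  · exact Measure.isClosed_support
  · refine (Measure.support_mono hle).trans ?_
    rw [Measure.support_add]
    exact union_subset_union (Measure.support_subset_of_isClosed hK.isClosed ha)
      (Measure.support_subset_of_isClosed hL.isClosed hb)

end RadonMeasure

section Comparison

variable {X : Type*} [TopologicalSpace X]

theorem exists_continuous_one_zero_of_isCompact_of_isOpen [CompletelyRegularSpace X] {K U : Set X}
    (hK : IsCompact K) (hU : IsOpen U) (hKU : K ⊆ U) :
    ∃ u : C(X, ℝ), EqOn u 1 K ∧ EqOn u 0 Uᶜ ∧ ∀ x, u x ∈ Icc (0 : ℝ) 1 := by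
  obtain ⟨V, hV, rfl⟩ := isInducing_stoneCechUnit.isOpen_iff.1 hU
  obtain ⟨f, hf_zero, hf_one, hf⟩ := exists_continuous_zero_one_of_isClosed hV.isClosed_compl
    (hK.image continuous_stoneCechUnit).isClosed
    (disjoint_compl_left_iff_subset.2 (image_subset_iff.2 hKU))
  exact ⟨f.comp ⟨stoneCechUnit, continuous_stoneCechUnit⟩,
    fun x hx => hf_one (mem_image_of_mem _ hx), fun x hx => hf_zero hx, fun x => hf _⟩

variable [MeasurableSpace X] [BorelSpace X]

theorem le_of_forall_integral_le [CompletelyRegularSpace X] {a b : Measure X} [IsFiniteMeasure a]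
    [IsFiniteMeasure b] [a.InnerRegular] [b.InnerRegular]
    (h : ∀ u : C(X, ℝ), 0 ≤ u → ∫ x, u x ∂a ≤ ∫ x, u x ∂b) : a ≤ b := by
  have hopen : ∀ K U : Set X, IsCompact K → IsOpen U → K ⊆ U → a K ≤ b U := by
    intro K U hK hU hKU
    obtain ⟨u, hu_one, hu_zero, hu⟩ := exists_continuous_one_zero_of_isCompact_of_isOpen hK hU hKU
    have hu_int : Integrable u a := .of_bound u.continuous.aestronglyMeasurable 1
      (.of_forall fun x => abs_le.2 ⟨by linarith [(hu x).1], (hu x).2⟩)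
    calc a K ≤ ENNReal.ofReal (∫ x, u x ∂a) :=
          hu_int.measure_le_integral (.of_forall fun x => (hu x).1) fun x hx => (hu_one hx).ge
      _ ≤ ENNReal.ofReal (∫ x, u x ∂b) := ENNReal.ofReal_le_ofReal (h u fun x => (hu x).1)
      _ ≤ b U := integral_le_measure (fun x _ => (hu x).2) fun x hx => (hu_zero hx).le
  refine Measure.le_iff.2 fun B hB => ?_
  rw [hB.measure_eq_iSup_isCompact]
  refine iSup₂_le fun K hKB => iSup_le fun hK => ?_
  calc a K ≤ b K := by
        rw [hK.measure_eq_iInf_isOpen (μ := b)]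
        exact le_iInf₂ fun U hKU => le_iInf fun hU => hopen K U hK hU hKU
    _ ≤ b B := measure_mono hKB

theorem McMem.le_iff_forall_phiFun_le [T35Space X] {μ ν : SignedMeasure X} (hμ : McMem μ)
    (hν : McMem ν) : μ ≤ ν ↔ ∀ u : C(X, ℝ), 0 ≤ u → phiFun μ u ≤ phiFun ν u := by
  have hposμ (u : C(X, ℝ)) := (hμ.integrable u).left_of_add_measure
  have hnegμ (u : C(X, ℝ)) := (hμ.integrable u).right_of_add_measure
  have hposν (u : C(X, ℝ)) := (hν.integrable u).left_of_add_measure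
  have hnegν (u : C(X, ℝ)) := (hν.integrable u).right_of_add_measure
  have hphi (u : C(X, ℝ)) : phiFun μ u ≤ phiFun ν u ↔
      ∫ x, u x ∂(μ.toJordanDecomposition.posPart + ν.toJordanDecomposition.negPart) ≤
        ∫ x, u x ∂(ν.toJordanDecomposition.posPart + μ.toJordanDecomposition.negPart) := by
    rw [integral_add_measure (hposμ u) (hnegν u), integral_add_measure (hposν u) (hnegμ u)]
    exact sub_le_sub_iff
  simp only [hphi, le_iff_posPart_add_negPart_le]
  refine ⟨fun hle u hu => integral_mono_measure hle (.of_forall hu)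
    ((hposν u).add_measure (hnegμ u)), fun h => ?_⟩
  have := hμ.innerRegular_posPart
  have := hμ.innerRegular_negPart
  have := hν.innerRegular_posPart
  have := hν.innerRegular_negPart
  exact le_of_forall_integral_le h

theorem McMem.eq_of_phiFun_eq [T35Space X] {μ ν : SignedMeasure X} (hμ : McMem μ) (hν : McMem ν)
    (h : phiFun μ = phiFun ν) : μ = ν :=
  le_antisymm ((hμ.le_iff_forall_phiFun_le hν).2 fun u _ => (congrFun h u).le)
    ((hν.le_iff_forall_phiFun_le hμ).2 fun u _ => (congrFun h u).ge)

theorem McMem.nonneg_iff_forall_phiFun_nonneg [T35Space X] {μ : SignedMeasure X} (hμ : McMem μ) :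
    0 ≤ μ ↔ ∀ u : C(X, ℝ), 0 ≤ u → 0 ≤ phiFun μ u := by
  simpa [phiFun, SignedMeasure.toJordanDecomposition_zero] using
    mcMem_zero.le_iff_forall_phiFun_le hμ

end Comparison

theorem Realcompact.exists_mcMem_phiFun_eq {X : Type u} [TopologicalSpace X] [MeasurableSpace X]
    [BorelSpace X] (hX : Realcompact X) {φ : C(X, ℝ) →ₗ[ℝ] ℝ} (hφ : IsOrderBdd C(X, ℝ) φ) :
    ∃ μ : SignedMeasure X, McMem μ ∧ phiFun μ = φ := by
  have := hX.t35Space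
  obtain ⟨ψ₁, ψ₂, rfl⟩ := hφ.exists_eq_sub_positiveLinearMap
  obtain ⟨a, K, ha_fin, ha_reg, hK, haK, ha⟩ := hX.exists_isCompact_innerRegular ψ₁
  obtain ⟨b, L, hb_fin, hb_reg, hL, hbL, hb⟩ := hX.exists_isCompact_innerRegular ψ₂
  refine ⟨a.toSignedMeasure - b.toSignedMeasure, mcMem_toSignedMeasure_sub hK hL haK hbL, ?_⟩
  ext u
  rw [phiFun_toSignedMeasure_sub (integrable_of_measure_compl_eq_zero hK haK u)
    (integrable_of_measure_compl_eq_zero hL hbL u), ← ha, ← hb]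
  rfl

/-- Riesz representation for realcompact spaces.  For realcompact `X`,
every `u ∈ C(X)` is `|μ|`-integrable for every `μ ∈ M_c(X)`, and `μ ↦ φ_μ` is a linear
bijection of `M_c(X)` onto the order dual `C(X)~` which is positive together with its
inverse, i.e. a lattice isomorphism. -/
theorem riesz_representation_realcompact {X : Type u} [TopologicalSpace X]
    [MeasurableSpace X] [BorelSpace X] (hX : Realcompact X) :
    (∀ μ : SignedMeasure X, McMem μ →
      ∀ u : C(X, ℝ), Integrable (fun x => u x) μ.totalVariation) ∧
    (∀ μ : SignedMeasure X, McMem μ →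
      ∃ φ : C(X, ℝ) →ₗ[ℝ] ℝ, ⇑φ = phiFun μ ∧ IsOrderBdd C(X, ℝ) φ) ∧
    (∀ μ ν : SignedMeasure X, McMem μ → McMem ν →
      ∀ u : C(X, ℝ), phiFun (μ + ν) u = phiFun μ u + phiFun ν u) ∧
    (∀ (c : ℝ) (μ : SignedMeasure X), McMem μ →
      ∀ u : C(X, ℝ), phiFun (c • μ) u = c * phiFun μ u) ∧
    (∀ μ ν : SignedMeasure X, McMem μ → McMem ν → phiFun μ = phiFun ν → μ = ν) ∧
    (∀ φ : C(X, ℝ) →ₗ[ℝ] ℝ, IsOrderBdd C(X, ℝ) φ →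
      ∃ μ : SignedMeasure X, McMem μ ∧ phiFun μ = ⇑φ) ∧
    (∀ μ : SignedMeasure X, McMem μ →
      (0 ≤ μ ↔ ∀ u : C(X, ℝ), 0 ≤ u → 0 ≤ phiFun μ u)) := by
  have := hX.t35Space
  exact ⟨fun μ hμ => hμ.integrable,
    fun μ hμ => exists_linearMap_eq_phiFun hμ.integrable,
    fun μ ν hμ hν u => phiFun_add (hμ.integrable u) (hν.integrable u),
    fun c μ hμ u => phiFun_smul c (hμ.integrable u),
    fun μ ν hμ hν => hμ.eq_of_phiFun_eq hν,
    fun φ hφ => hX.exists_mcMem_phiFun_eq hφ,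
    fun μ hμ => hμ.nonneg_iff_forall_phiFun_nonneg⟩
end

section
/- Let X be a topological space and K ⊆ X compact, and let T : M(K) → M_c(X) be the map μ ↦ μ^{(K,X)} where μ^{(K,X)}(B) := μ(B ∩ K). Then T[M(K)] = {ν ∈ M_c(X) : S_ν ⊆ K}, and this set is a band in M_c(X). -/
open MeasureTheory Function Topology
open scoped ENNReal

/-- The extension map `T : M(K) → M_c(X)`, `μ ↦ μ^{(K,X)}` with
`μ^{(K,X)}(B) = μ(B ∩ K)`; it is implemented as the pushforward of `μ` under the
inclusion `K → X`. -/
noncomputable def extMeas {X : Type u} [TopologicalSpace X] [MeasurableSpace X]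
    (K : Set X) (μ : SignedMeasure K) : SignedMeasure X :=
  μ.map (Subtype.val : K → X)

/-!
A Radon measure `ν` satisfies `S_ν ⊆ K`, for closed `K`, exactly when it equals its restriction
`ν|_K`; such a measure is the extension of its pullback to `K`. If `σ` is a supremum in `M_c(X)` of
measures supported in `K`, then `σ|_K` is again an upper bound, so `σ ≤ σ|_K`; and `σ` is
nonnegative off `K`, where those measures vanish, so `σ|_K ≤ σ`.
-/

section InnerRegular

variable {α β : Type*} [TopologicalSpace α] [MeasurableSpace α]
  [TopologicalSpace β] [MeasurableSpace β]

theorem innerRegular_of_le_s12 {μ ν : Measure α} [IsFiniteMeasure ν] [ν.InnerRegular] (h : μ ≤ ν) :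
    μ.InnerRegular := by
  have : IsFiniteMeasure μ := isFiniteMeasure_of_le ν h
  refine ⟨fun U hU r hr => ?_⟩
  obtain ⟨C, hCU, hC, hlt⟩ :=
    hU.exists_isCompact_lt_add (measure_ne_top ν U) (tsub_pos_of_lt hr).ne'
  refine ⟨C, hCU, hC, ?_⟩
  -- Splitting `ν = (ν - μ) + μ` avoids subtracting the possibly non-measurable set `C` from `U`.
  have hsplit (A : Set α) : ν A = (ν - μ) A + μ A := by
    rw [← Measure.add_apply, Measure.sub_add_cancel_of_le h]
  have hadd : (ν - μ) U + μ U < (ν - μ) U + (μ C + (μ U - r)) := calc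
    (ν - μ) U + μ U < (ν - μ) C + μ C + (μ U - r) := by rwa [← hsplit, ← hsplit]
    _ ≤ (ν - μ) U + (μ C + (μ U - r)) := by rw [add_assoc]; gcongr
  by_contra! hCr
  refine (lt_of_add_lt_add_left hadd).not_ge ?_
  calc μ C + (μ U - r) ≤ r + (μ U - r) := by gcongr
    _ = μ U := add_tsub_cancel_of_le hr.le

theorem innerRegular_map_iff [BorelSpace α] [BorelSpace β] {μ : Measure α} {f : α → β}
    (hf : IsInducing f) (hfm : MeasurableEmbedding f) :
    (μ.map f).InnerRegular ↔ μ.InnerRegular := by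
  refine ⟨fun h => ?_, fun _ => Measure.InnerRegular.map_of_continuous hf.continuous⟩
  rw [← hfm.comap_map μ]
  exact ⟨h.innerRegular.comap hfm (fun _ hU => hfm.measurableSet_image' hU)
    fun _ hCf hC => hf.isCompact_preimage' hC hCf⟩

theorem mem_support_map_iff [OpensMeasurableSpace α] [BorelSpace β] {μ : Measure α} {f : α → β}
    (hf : IsInducing f) {x : α} : f x ∈ (μ.map f).support ↔ x ∈ μ.support := by
  have hbasis := nhds_basis_opens (f x)
  have hbasis_comap := hbasis.comap f
  rw [← hf.nhds_eq_comap] at hbasis_comap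
  rw [hbasis.mem_measureSupport, hbasis_comap.mem_measureSupport]
  refine forall₂_congr fun U hU => ?_
  rw [Measure.map_apply hf.continuous.measurable hU.2.measurableSet]

theorem support_map_of_isClosedEmbedding [OpensMeasurableSpace α] [BorelSpace β] {μ : Measure α}
    {f : α → β} (hf : IsClosedEmbedding f) : (μ.map f).support = f '' μ.support := by
  have hrange : (μ.map f).support ⊆ Set.range f := by
    refine Measure.support_subset_of_isClosed hf.isClosed_range ?_
    exact mem_ae_map_iff hf.continuous.measurable.aemeasurable
      hf.isClosed_range.measurableSet |>.2 (by simp)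
  ext y
  constructor
  · intro hy
    obtain ⟨x, rfl⟩ := hrange hy
    exact Set.mem_image_of_mem f ((mem_support_map_iff hf.isInducing).1 hy)
  · rintro ⟨x, hx, rfl⟩
    exact (mem_support_map_iff hf.isInducing).2 hx

end InnerRegular

section VectorMeasure

variable {α β V : Type*} [MeasurableSpace α] [MeasurableSpace β]

theorem restrict_eq_zero_iff_variation_eq_zero [TopologicalSpace V] [ENormedAddCommMonoid V]
    [T2Space V] {ν : VectorMeasure α V} {s : Set α} (hs : MeasurableSet s) :
    ν.restrict s = 0 ↔ ν.variation s = 0 := by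
  rw [← VectorMeasure.variation_eq_zero, VectorMeasure.variation_restrict hs,
    Measure.restrict_eq_zero]

theorem restrict_compl_eq_zero_iff [AddCommGroup V] [TopologicalSpace V]
    [IsTopologicalAddGroup V] [T2Space V] {ν : VectorMeasure α V} {s : Set α}
    (hs : MeasurableSet s) : ν.restrict sᶜ = 0 ↔ ν.restrict s = ν := by
  rw [← add_right_inj (ν.restrict s), ν.restrict_add_restrict_compl hs, add_zero, eq_comm]

theorem restrict_le_restrict_of_le [TopologicalSpace V] [AddCommMonoid V] [PartialOrder V]
    {ν ρ : VectorMeasure α V} (h : ν ≤ ρ) (s : Set α) : ν.restrict s ≤ ρ.restrict s :=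
  VectorMeasure.restrict_le_restrict_of_subset_le ν ρ fun t ht _ => h t ht

theorem exists_map_eq_restrict_range [TopologicalSpace V] [AddCommMonoid V] {f : α → β}
    (hf : MeasurableEmbedding f) (ν : VectorMeasure β V) :
    ∃ μ : VectorMeasure α V, μ.map f = ν.restrict (Set.range f) := by
  rcases isEmpty_or_nonempty α with _ | _
  · exact ⟨0, by simp [Set.range_eq_empty]⟩
  · obtain ⟨g, hg, hgf⟩ := hf.exists_measurable_extend measurable_id fun _ => ‹Nonempty α›
    refine ⟨(ν.restrict (Set.range f)).map g, ?_⟩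
    ext B hB
    have hfB := hf.measurable hB
    rw [VectorMeasure.map_apply _ hf.measurable hB, VectorMeasure.map_apply _ hg hfB,
      VectorMeasure.restrict_apply _ hf.measurableSet_range (hg hfB),
      VectorMeasure.restrict_apply _ hf.measurableSet_range hB]
    congr 1
    ext y
    refine and_congr_left ?_
    rintro ⟨x, rfl⟩
    simp [show g (f x) = x from congrFun hgf x]

end VectorMeasure

section SignedMeasure

variable {α : Type*} [MeasurableSpace α] {ν ρ : SignedMeasure α}

theorem totalVariation_add_le : (ν + ρ).totalVariation ≤ ν.totalVariation + ρ.totalVariation := by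
  simpa only [SignedMeasure.totalVariation_eq_variation] using VectorMeasure.variation_add_le

theorem totalVariation_smul (c : ℝ) : (c • ν).totalVariation = ‖c‖₊ • ν.totalVariation := by
  simpa only [SignedMeasure.totalVariation_eq_variation] using VectorMeasure.variation_smul

theorem totalVariation_restrict_le {s : Set α} :
    SignedMeasure.totalVariation (ν.restrict s) ≤ ν.totalVariation := by
  simpa only [SignedMeasure.totalVariation_eq_variation] using
    VectorMeasure.variation_restrict_le.trans Measure.restrict_le_self

end SignedMeasure

section Radon

variable {X : Type*} [TopologicalSpace X] [MeasurableSpace X] {K : Set X}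
  {μ : Measure X} {ν ρ σ : SignedMeasure X}

theorem isRadon_iff_innerRegular_s12 : IsRadon ν ↔ ν.totalVariation.InnerRegular := by
  constructor
  · intro h
    refine ⟨fun U hU r hr => ?_⟩
    rw [h U hU] at hr
    simpa only [lt_iSup_iff, exists_prop] using hr
  · intro h B hB
    exact h.innerRegular.measure_eq_iSup hB

theorem msupport_eq_support_s12 : msupport ν = ν.totalVariation.support := by
  ext x
  simp only [msupport, Set.mem_ofPred_eq, (nhds_basis_opens x).mem_measureSupport, and_imp]
  exact forall_congr' fun U => forall_comm

theorem isClosed_msupport : IsClosed (msupport ν) :=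
  msupport_eq_support_s12 (ν := ν) ▸ Measure.isClosed_support

theorem msupport_subset_support_of_le (h : ν.totalVariation ≤ μ) : msupport ν ⊆ μ.support :=
  msupport_eq_support_s12 (ν := ν) ▸ Measure.support_mono h

theorem msupport_mono (h : ν.totalVariation ≤ ρ.totalVariation) : msupport ν ⊆ msupport ρ :=
  (msupport_subset_support_of_le h).trans msupport_eq_support_s12.superset

theorem msupport_add_subset : msupport (ν + ρ) ⊆ msupport ν ∪ msupport ρ := by
  simpa only [msupport_eq_support_s12, Measure.support_add] using
    msupport_subset_support_of_le totalVariation_add_le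

theorem msupport_smul_subset (c : ℝ) : msupport (c • ν) ⊆ msupport ν := by
  simp only [msupport_eq_support_s12, totalVariation_smul]
  exact (Measure.smul_absolutelyContinuous (c := ‖c‖₊)).support_mono

theorem msupport_subset_iff_restrict_eq [OpensMeasurableSpace X] (hK : IsClosed K)
    (hν : IsRadon ν) : msupport ν ⊆ K ↔ ν.restrict K = ν := by
  have := isRadon_iff_innerRegular_s12.1 hν
  rw [← restrict_compl_eq_zero_iff hK.measurableSet,
    restrict_eq_zero_iff_variation_eq_zero hK.measurableSet.compl,
    ← SignedMeasure.totalVariation_eq_variation, msupport_eq_support_s12]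
  constructor
  · intro h
    exact measure_mono_null (Set.compl_subset_compl.2 h)
      Measure.measure_compl_support_of_innerRegular
  · exact Measure.support_subset_of_isClosed hK

theorem isRadon_iff_mcMem [CompactSpace X] : IsRadon ν ↔ McMem ν :=
  (and_iff_left isClosed_msupport.isCompact).symm

namespace McMem

theorem add (hν : McMem ν) (hρ : McMem ρ) : McMem (ν + ρ) := by
  have := isRadon_iff_innerRegular_s12.1 hν.1
  have := isRadon_iff_innerRegular_s12.1 hρ.1
  exact ⟨isRadon_iff_innerRegular_s12.2 (innerRegular_of_le_s12 totalVariation_add_le),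
    (hν.2.union hρ.2).of_isClosed_subset isClosed_msupport msupport_add_subset⟩

theorem smul (c : ℝ) (hν : McMem ν) : McMem (c • ν) := by
  have := isRadon_iff_innerRegular_s12.1 hν.1
  refine ⟨isRadon_iff_innerRegular_s12.2 ?_,
    hν.2.of_isClosed_subset isClosed_msupport (msupport_smul_subset c)⟩
  rw [totalVariation_smul]
  infer_instance

theorem of_totalVariation_le (hρ : McMem ρ) (h : ν.totalVariation ≤ ρ.totalVariation) :
    McMem ν := by
  have := isRadon_iff_innerRegular_s12.1 hρ.1
  exact ⟨isRadon_iff_innerRegular_s12.2 (innerRegular_of_le_s12 h),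
    hρ.2.of_isClosed_subset isClosed_msupport (msupport_mono h)⟩

theorem restrict (hν : McMem ν) (K : Set X) : McMem (ν.restrict K) :=
  hν.of_totalVariation_le totalVariation_restrict_le

end McMem

theorem restrict_eq_self_of_isLeast_upperBounds (hK : MeasurableSet K)
    {D : Set (SignedMeasure X)} (hD : ∀ ν ∈ D, ν.restrict K = ν)
    (hσ : IsLeast (upperBounds D ∩ {τ | McMem τ}) σ) : σ.restrict K = σ := by
  obtain ⟨⟨hub, hσc⟩, hleast⟩ := hσ
  have hle : σ ≤ σ.restrict K := hleast ⟨fun ν hν =>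
    hD ν hν ▸ restrict_le_restrict_of_le (hub hν) K, hσc.restrict K⟩
  have hcompl : 0 ≤ σ.restrict Kᶜ := by
    rcases D.eq_empty_or_nonempty with rfl | ⟨ν, hν⟩
    · -- Every element of `M_c(X)` bounds `∅` from above, in particular `σ + σ`.
      have hσ_nonneg : 0 ≤ σ :=
        (le_add_iff_nonneg_right σ).1 (hleast ⟨by simp, hσc.add hσc⟩)
      simpa only [VectorMeasure.restrict_zero] using restrict_le_restrict_of_le hσ_nonneg Kᶜ
    · rw [← (restrict_compl_eq_zero_iff hK).2 (hD ν hν)]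
      exact restrict_le_restrict_of_le (hub hν) Kᶜ
  refine le_antisymm ?_ hle
  calc σ.restrict K ≤ σ.restrict K + σ.restrict Kᶜ := le_add_of_nonneg_right hcompl
    _ = σ := σ.restrict_add_restrict_compl hK

end Radon

section Extension

variable {X : Type*} [TopologicalSpace X] [MeasurableSpace X] {K : Set X}

theorem totalVariation_extMeas (hK : MeasurableSet K) (μ : SignedMeasure K) :
    (extMeas K μ).totalVariation = μ.totalVariation.map Subtype.val := by
  simpa only [extMeas, SignedMeasure.totalVariation_eq_variation] using
    (MeasurableEmbedding.subtype_coe hK).variation_map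

theorem restrict_extMeas (hK : MeasurableSet K) (μ : SignedMeasure K) :
    (extMeas K μ).restrict K = extMeas K μ := by
  rw [extMeas, VectorMeasure.restrict_map _ measurable_subtype_coe hK, Subtype.coe_preimage_self,
    VectorMeasure.restrict_univ]

theorem exists_extMeas_eq (hK : MeasurableSet K) {ν : SignedMeasure X} (hν : ν.restrict K = ν) :
    ∃ μ : SignedMeasure K, extMeas K μ = ν := by
  simpa only [extMeas, Subtype.range_coe, hν] using
    exists_map_eq_restrict_range (MeasurableEmbedding.subtype_coe hK) ν

variable [BorelSpace X]

theorem isRadon_extMeas_iff (hK : MeasurableSet K) {μ : SignedMeasure K} :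
    IsRadon (extMeas K μ) ↔ IsRadon μ := by
  rw [isRadon_iff_innerRegular_s12, isRadon_iff_innerRegular_s12, totalVariation_extMeas hK,
    innerRegular_map_iff IsInducing.subtypeVal (MeasurableEmbedding.subtype_coe hK)]

theorem msupport_extMeas (hK : IsClosed K) (μ : SignedMeasure K) :
    msupport (extMeas K μ) = Subtype.val '' msupport μ := by
  rw [msupport_eq_support_s12, msupport_eq_support_s12, totalVariation_extMeas hK.measurableSet,
    support_map_of_isClosedEmbedding hK.isClosedEmbedding_subtypeVal]

theorem mcMem_extMeas_iff (hK : IsClosed K) {μ : SignedMeasure K} :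
    McMem (extMeas K μ) ↔ McMem μ :=
  and_congr (isRadon_extMeas_iff hK.measurableSet)
    (msupport_extMeas hK μ ▸ IsInducing.subtypeVal.isCompact_iff.symm)

theorem image_extMeas (hK : IsClosed K) :
    extMeas K '' {μ : SignedMeasure K | McMem μ} =
      {ν : SignedMeasure X | McMem ν ∧ msupport ν ⊆ K} := by
  ext ν
  constructor
  · rintro ⟨μ, hμ, rfl⟩
    have hext := (mcMem_extMeas_iff hK).2 hμ
    exact ⟨hext, (msupport_subset_iff_restrict_eq hK hext.1).2
      (restrict_extMeas hK.measurableSet μ)⟩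
  · rintro ⟨hν, hνK⟩
    obtain ⟨μ, rfl⟩ := exists_extMeas_eq hK.measurableSet
      ((msupport_subset_iff_restrict_eq hK hν.1).1 hνK)
    exact ⟨μ, (mcMem_extMeas_iff hK).1 hν, rfl⟩

end Extension

theorem range_extension_map_band_general {X : Type*} [TopologicalSpace X]
    [MeasurableSpace X] [BorelSpace X] (K : Set X) (hK : IsClosed K) :
    (extMeas K '' {μ : SignedMeasure K | McMem μ} =
      {ν : SignedMeasure X | McMem ν ∧ msupport ν ⊆ K}) ∧
    (∀ ν ρ : SignedMeasure X, (McMem ν ∧ msupport ν ⊆ K) → (McMem ρ ∧ msupport ρ ⊆ K) →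
      McMem (ν + ρ) ∧ msupport (ν + ρ) ⊆ K) ∧
    (∀ (c : ℝ) (ν : SignedMeasure X), (McMem ν ∧ msupport ν ⊆ K) →
      McMem (c • ν) ∧ msupport (c • ν) ⊆ K) ∧
    (∀ ν ρ : SignedMeasure X, McMem ν → (McMem ρ ∧ msupport ρ ⊆ K) →
      (∀ B : Set X, MeasurableSet B → ν.totalVariation B ≤ ρ.totalVariation B) →
      McMem ν ∧ msupport ν ⊆ K) ∧
    (∀ D : Set (SignedMeasure X), (∀ ν ∈ D, McMem ν ∧ msupport ν ⊆ K) →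
      ∀ σ : SignedMeasure X, McMem σ → (∀ ν ∈ D, ν ≤ σ) →
      (∀ τ : SignedMeasure X, McMem τ → (∀ ν ∈ D, ν ≤ τ) → σ ≤ τ) →
      McMem σ ∧ msupport σ ⊆ K) := by
  refine ⟨image_extMeas hK, ?add, ?smul, ?ideal, ?sup⟩
  case add =>
    rintro ν ρ ⟨hν, hνK⟩ ⟨hρ, hρK⟩
    exact ⟨hν.add hρ, msupport_add_subset.trans (Set.union_subset hνK hρK)⟩
  case smul =>
    rintro c ν ⟨hν, hνK⟩
    exact ⟨hν.smul c, (msupport_smul_subset c).trans hνK⟩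
  case ideal =>
    rintro ν ρ hν ⟨-, hρK⟩ hle
    exact ⟨hν, (msupport_mono (Measure.le_iff.2 hle)).trans hρK⟩
  case sup =>
    intro D hD σ hσ hub hleast
    have hDK (ν) (hν : ν ∈ D) : ν.restrict K = ν :=
      (msupport_subset_iff_restrict_eq hK (hD ν hν).1.1).1 (hD ν hν).2
    have hσ_least : IsLeast (upperBounds D ∩ {τ | McMem τ}) σ :=
      ⟨⟨fun ν hν => hub ν hν, hσ⟩, fun τ hτ => hleast τ hτ.2 fun ν hν => hτ.1 hν⟩
    exact ⟨hσ, (msupport_subset_iff_restrict_eq hK hσ.1).2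
      (restrict_eq_self_of_isLeast_upperBounds hK.measurableSet hDK hσ_least)⟩

/-- For compact `K ⊆ X` the range of `T = extMeas K` on `M(K)` is
`{ν ∈ M_c(X) : S_ν ⊆ K}`, and this set is a band in `M_c(X)`. -/
theorem range_extension_map_band {X : Type u} [TopologicalSpace X] [T2Space X]
    [MeasurableSpace X] [BorelSpace X] (K : Set X) (hK : IsCompact K) :
    (extMeas K '' {μ : SignedMeasure K | IsRadon μ} =
      {ν : SignedMeasure X | McMem ν ∧ msupport ν ⊆ K}) ∧
    -- the set S = {ν ∈ M_c(X) : S_ν ⊆ K} is a band in M_c(X):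
    -- (a) it is a linear subspace,
    (∀ ν ρ : SignedMeasure X, (McMem ν ∧ msupport ν ⊆ K) → (McMem ρ ∧ msupport ρ ⊆ K) →
      McMem (ν + ρ) ∧ msupport (ν + ρ) ⊆ K) ∧
    (∀ (c : ℝ) (ν : SignedMeasure X), (McMem ν ∧ msupport ν ⊆ K) →
      McMem (c • ν) ∧ msupport (c • ν) ⊆ K) ∧
    -- (b) it is an ideal: if ν ∈ M_c(X) and |ν| ≤ |ρ| with ρ ∈ S then ν ∈ S,
    (∀ ν ρ : SignedMeasure X, McMem ν → (McMem ρ ∧ msupport ρ ⊆ K) →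
      (∀ B : Set X, MeasurableSet B → ν.totalVariation B ≤ ρ.totalVariation B) →
      McMem ν ∧ msupport ν ⊆ K) ∧
    -- (c) it is closed under existing suprema in M_c(X)
    (∀ D : Set (SignedMeasure X), (∀ ν ∈ D, McMem ν ∧ msupport ν ⊆ K) →
      ∀ σ : SignedMeasure X, McMem σ → (∀ ν ∈ D, ν ≤ σ) →
      (∀ τ : SignedMeasure X, McMem τ → (∀ ν ∈ D, ν ≤ τ) → σ ≤ τ) →
      McMem σ ∧ msupport σ ⊆ K) := by
  have : CompactSpace K := isCompact_iff_compactSpace.1 hK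
  simpa only [isRadon_iff_mcMem] using range_extension_map_band_general K hK.isClosed
end
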